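/- The q → 0 limit of the theta-ratio at an integer shift: for w ∈ ℤ, 0 < q < 1, and positive reals a, z with az ≠ 1 and a ≠ 1, lim_{q→0⁺} θ(z a q^w)/θ(a q^w) = z^{-w - 1/2} · (1 - az)/(1 - a). -/

import Mathlib

open Real Filter Topology

/-- The real theta function
`θ_q(x) = (x^{1/2} - x^{-1/2}) ∏_{i≥1} (1 - qⁱ x)(1 - qⁱ/x)`. -/
noncomputable def thetaR (q x : ℝ) : ℝ :=
  (Real.sqrt x - 1 / Real.sqrt x) *
    ∏' i : ℕ, (1 - q ^ (i + 1) * x) * (1 - q ^ (i + 1) / x)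

/-!
For `x > 0` one has `θ_q(x) = -x^{-1/2} (x; q)_∞ (q/x; q)_∞`. The product
`ϑ_q(x) = (x; q)_∞ (q/x; q)_∞` satisfies `ϑ_q(qx) = -x⁻¹ ϑ_q(x)`, so replacing `a` by `a q^w`
multiplies `ϑ_q(za) / ϑ_q(a)` by exactly `z^{-w}`. Moreover `ϑ_q(x)` is continuous in `q` on the
open unit disc, with value `1 - x` at `q = 0`.
-/

section QPochhammer

variable {R : Type*} [NormedCommRing R]

/-- The infinite `q`-Pochhammer symbol `(x; q)_∞ = ∏_{i≥0} (1 - qⁱ x)`, through which the theta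
functions below are expressed. It is meaningful for `‖q‖ < 1`; where the product does not converge
unconditionally, `∏'` gives a junk value. -/
noncomputable def qPochhammerInf (q x : R) : R := ∏' i : ℕ, (1 - q ^ i * x)

theorem qPochhammerInf_zero_left (x : R) : qPochhammerInf 0 x = 1 - x := by
  rw [qPochhammerInf, tprod_eq_mulSingle 0 fun i hi ↦ by simp [zero_pow hi]]
  simp

variable [NormOneClass R] [CompleteSpace R] {q : R}

theorem multipliable_one_sub_pow_mul (hq : ‖q‖ < 1) (x : R) :
    Multipliable fun i : ℕ ↦ 1 - q ^ i * x := by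
  have hsum : Summable fun i : ℕ ↦ ‖-(q ^ i * x)‖ := by
    simp only [norm_neg]
    exact ((summable_geometric_of_lt_one (norm_nonneg q) hq).mul_right ‖x‖).of_nonneg_of_le
      (fun _ ↦ norm_nonneg _) fun i ↦ (norm_mul_le _ _).trans (by gcongr; exact norm_pow_le q i)
  simpa only [sub_eq_add_neg] using multipliable_one_add_of_summable hsum

theorem qPochhammerInf_eq_one_sub_mul (hq : ‖q‖ < 1) (x : R) :
    qPochhammerInf q x = (1 - x) * qPochhammerInf q (q * x) := by
  have hshift (i : ℕ) : 1 - q ^ i * (q * x) = 1 - q ^ (i + 1) * x := by rw [pow_succ, mul_assoc]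
  have htail := multipliable_one_sub_pow_mul hq (q * x)
  simp only [hshift] at htail
  simpa only [qPochhammerInf, hshift, pow_zero, one_mul] using
    tprod_eq_zero_mul' (f := fun i : ℕ ↦ 1 - q ^ i * x) htail

theorem continuousAt_qPochhammerInf (hq : ‖q‖ < 1) (x : R) :
    ContinuousAt (fun p : R × R ↦ qPochhammerInf p.1 p.2) (q, x) := by
  obtain ⟨r, hqr, hr⟩ := exists_between hq
  have hr₀ : 0 ≤ r := (norm_nonneg q).trans hqr.le
  have hq_lt : ∀ᶠ p : R × R in 𝓝 (q, x), ‖p.1‖ < r :=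
    continuous_fst.norm.continuousAt.eventually_lt_const hqr
  have hx_lt : ∀ᶠ p : R × R in 𝓝 (q, x), ‖p.2‖ < ‖x‖ + 1 :=
    continuous_snd.norm.continuousAt.eventually_lt_const (lt_add_one ‖x‖)
  have hbound : ∀ᶠ p : R × R in 𝓝 (q, x), ∀ i : ℕ, ‖-(p.1 ^ i * p.2)‖ ≤ r ^ i * (‖x‖ + 1) := by
    filter_upwards [hq_lt, hx_lt] with p hp₁ hp₂ i
    calc ‖-(p.1 ^ i * p.2)‖ ≤ ‖p.1‖ ^ i * ‖p.2‖ := by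
          rw [norm_neg]
          exact (norm_mul_le _ _).trans (by gcongr; exact norm_pow_le _ _)
      _ ≤ r ^ i * (‖x‖ + 1) := by gcongr
  have hsum : Summable fun i : ℕ ↦ r ^ i * (‖x‖ + 1) :=
    (summable_geometric_of_lt_one hr₀ hr).mul_right _
  have hterm (i : ℕ) : ContinuousAt (fun p : R × R ↦ -(p.1 ^ i * p.2)) (q, x) := by fun_prop
  simpa only [ContinuousAt, qPochhammerInf, sub_eq_add_neg] using
    tendsto_tprod_one_add_of_dominated_convergence hsum hterm hbound

end QPochhammer

theorem apply_mul_zpow_of_apply_mul {G H : Type*} [GroupWithZero G] [GroupWithZero H]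
    {f : G → H} {q : G} {c : H} (hq : q ≠ 0) (hc : c ≠ 0)
    (hf : ∀ x ≠ 0, f (x * q) = c * f x) {x : G} (hx : x ≠ 0) (w : ℤ) :
    f (x * q ^ w) = c ^ w * f x := by
  have hstep (n : ℤ) : f (x * q ^ (n + 1)) = c * f (x * q ^ n) := by
    rw [zpow_add_one₀ hq, ← mul_assoc, hf _ (mul_ne_zero hx (zpow_ne_zero n hq))]
  induction w using Int.induction_on with
  | zero => simp
  | succ n ih => rw [hstep, ih, add_comm, zpow_one_add₀ hc, mul_assoc]
  | pred n ih =>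
    apply mul_left_cancel₀ hc
    rw [← hstep, ← mul_assoc, ← zpow_one_add₀ hc, sub_add_cancel, add_sub_cancel, ih]

section ModifiedTheta

variable {K : Type*} [NormedField K]

/-- The modified (multiplicative) theta function `ϑ_q(x) = (x; q)_∞ (q/x; q)_∞`: equal to
`thetaR` up to the factor `-x^{-1/2}`, but free of square roots and so defined over any normed
field. At `x = 0` the convention `q / 0 = 0` makes its value `1`. -/
noncomputable def modifiedTheta (q x : K) : K := qPochhammerInf q x * qPochhammerInf q (q / x)

theorem modifiedTheta_zero_left (x : K) : modifiedTheta 0 x = 1 - x := by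
  simp [modifiedTheta, qPochhammerInf_zero_left]

variable [CompleteSpace K] {q : K}

theorem continuousAt_modifiedTheta (hq : ‖q‖ < 1) (x : K) :
    ContinuousAt (fun q : K ↦ modifiedTheta q x) q := by
  have hleft : ContinuousAt (fun q : K ↦ qPochhammerInf q x) q :=
    (continuousAt_qPochhammerInf hq x).comp (f := fun q : K ↦ (q, x)) (by fun_prop)
  have hright : ContinuousAt (fun q : K ↦ qPochhammerInf q (q / x)) q :=
    (continuousAt_qPochhammerInf hq (q / x)).comp (f := fun q : K ↦ (q, q / x)) (by fun_prop)
  exact hleft.mul hright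

theorem modifiedTheta_mul_self (hq₀ : q ≠ 0) (hq : ‖q‖ < 1) {x : K} (hx : x ≠ 0) :
    modifiedTheta q (x * q) = -x⁻¹ * modifiedTheta q x := by
  have hx_shift : qPochhammerInf q x = (1 - x) * qPochhammerInf q (x * q) := by
    rw [qPochhammerInf_eq_one_sub_mul hq, mul_comm q]
  have hinv_shift : qPochhammerInf q x⁻¹ = (1 - x⁻¹) * qPochhammerInf q (q / x) := by
    rw [qPochhammerInf_eq_one_sub_mul hq, div_eq_mul_inv]
  have hdiv : q / (x * q) = x⁻¹ := by field_simp
  rw [modifiedTheta, modifiedTheta, hdiv, hx_shift, hinv_shift]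
  field_simp
  ring

theorem modifiedTheta_mul_zpow_div (hq₀ : q ≠ 0) (hq : ‖q‖ < 1) {a z : K} (ha : a ≠ 0)
    (hz : z ≠ 0) (w : ℤ) :
    modifiedTheta q (z * (a * q ^ w)) / modifiedTheta q (a * q ^ w) =
      z ^ (-w) * (modifiedTheta q (z * a) / modifiedTheta q a) := by
  have hstep (x : K) (hx : x ≠ 0) :
      modifiedTheta q (z * (x * q)) / modifiedTheta q (x * q) =
        z⁻¹ * (modifiedTheta q (z * x) / modifiedTheta q x) := by
    rw [← mul_assoc, modifiedTheta_mul_self hq₀ hq (mul_ne_zero hz hx),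
      modifiedTheta_mul_self hq₀ hq hx, mul_div_mul_comm]
    congr 1
    field_simp
  simpa only [inv_zpow'] using apply_mul_zpow_of_apply_mul
    (f := fun x ↦ modifiedTheta q (z * x) / modifiedTheta q x) hq₀ (inv_ne_zero hz) hstep ha w

theorem tendsto_modifiedTheta_div {x y : K} (hx : x ≠ 1) :
    Tendsto (fun q : K ↦ modifiedTheta q y / modifiedTheta q x) (𝓝 0)
      (𝓝 ((1 - y) / (1 - x))) := by
  have hlim (x : K) : Tendsto (fun q : K ↦ modifiedTheta q x) (𝓝 0) (𝓝 (1 - x)) := by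
    simpa only [modifiedTheta_zero_left] using
      (continuousAt_modifiedTheta (norm_zero.trans_lt one_pos) x).tendsto
  exact (hlim y).div (hlim x) (sub_ne_zero.2 hx.symm)

end ModifiedTheta

theorem thetaR_eq_neg_inv_sqrt_mul_modifiedTheta {q x : ℝ} (hq : ‖q‖ < 1) (hx : 0 < x) :
    thetaR q x = -(√x)⁻¹ * modifiedTheta q x := by
  have hpow (y : ℝ) (i : ℕ) : 1 - q ^ (i + 1) * y = 1 - q ^ i * (q * y) := by ring
  have hprod : ∏' i : ℕ, (1 - q ^ (i + 1) * x) * (1 - q ^ (i + 1) / x) =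
      qPochhammerInf q (q * x) * qPochhammerInf q (q / x) := by
    simp only [div_eq_mul_inv, hpow]
    exact (multipliable_one_sub_pow_mul hq _).tprod_mul (multipliable_one_sub_pow_mul hq _)
  have hprefactor : √x - 1 / √x = -(√x)⁻¹ * (1 - x) := by
    have hsqrt : √x ≠ 0 := (Real.sqrt_pos.2 hx).ne'
    field_simp
    rw [Real.sq_sqrt hx.le]
    ring
  rw [thetaR, hprod, hprefactor, modifiedTheta, qPochhammerInf_eq_one_sub_mul hq x]
  ring

theorem thetaR_mul_div_thetaR {q x z : ℝ} (hq : ‖q‖ < 1) (hx : 0 < x) (hz : 0 < z) :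
    thetaR q (z * x) / thetaR q x =
      (√z)⁻¹ * (modifiedTheta q (z * x) / modifiedTheta q x) := by
  have hsqrt : √x ≠ 0 := (Real.sqrt_pos.2 hx).ne'
  rw [thetaR_eq_neg_inv_sqrt_mul_modifiedTheta hq (mul_pos hz hx),
    thetaR_eq_neg_inv_sqrt_mul_modifiedTheta hq hx, mul_div_mul_comm, Real.sqrt_mul hz.le]
  congr 1
  field_simp

/-- The `q → 0⁺` limit of the theta ratio at an integer shift `w ∈ ℤ`:
`lim_{q→0⁺} θ_q(z a q^w)/θ_q(a q^w) = z^{-w-1/2} (1 - az)/(1 - a)`. -/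
theorem theta_ratio_limit_integer (a z : ℝ) (w : ℤ) (ha : 0 < a) (hz : 0 < z)
    (ha1 : a ≠ 1) (haz : a * z ≠ 1) :
    Tendsto (fun q : ℝ => thetaR q (z * a * q ^ w) / thetaR q (a * q ^ w))
      (nhdsWithin 0 (Set.Ioi 0))
      (nhds (z ^ (-(w : ℝ) - 1 / 2) * (1 - a * z) / (1 - a))) := by
  have hratio : ∀ᶠ q : ℝ in 𝓝[>] 0,
      z ^ (-(w : ℝ) - 1 / 2) * (modifiedTheta q (z * a) / modifiedTheta q a) =
        thetaR q (z * a * q ^ w) / thetaR q (a * q ^ w) := by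
    filter_upwards [Ioo_mem_nhdsGT one_pos] with q ⟨hq₀, hq₁⟩
    have hq : ‖q‖ < 1 := by rwa [Real.norm_of_nonneg hq₀.le]
    have hexp : z ^ (-(w : ℝ) - 1 / 2) = (√z)⁻¹ * z ^ (-w) := by
      rw [Real.rpow_sub hz, ← Real.sqrt_eq_rpow, ← Int.cast_neg, Real.rpow_intCast,
        div_eq_inv_mul]
    rw [mul_assoc z, thetaR_mul_div_thetaR hq (by positivity) hz,
      modifiedTheta_mul_zpow_div hq₀.ne' hq ha.ne' hz.ne', hexp, mul_assoc]
  rw [mul_div_assoc, mul_comm a z]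
  exact (((tendsto_modifiedTheta_div ha1).mono_left nhdsWithin_le_nhds).const_mul _).congr' hratio
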